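/- Let n ≥ 4 be an integer. For integers p, q with 1 ≤ p ≤ n, 0 ≤ q ≤ p and p + q ≥ 2, set V_{p,q}(x,t) = C(n,p) C(p,q) (2 ū(x,t) φ(x,t) + φ(x,t)²)^{n−p} (2 ū(x,t) + 2 φ(x,t))^{p−q} (binomial coefficients C(·,·)). Then there is a constant c > 0 such that for all t ≥ 1, sup_{x∈ℝ} |V_{p,q}(x,t)| ≤ c t^{−e(p,q)}, where e(2,0) = 2γ(n−2) + 2γ and e(p,q) = 2γ(n−p) for all other pairs with p + q ≥ 2. -/

import Mathlib

noncomputable def kap : ℝ := 1 / Real.sqrt Real.pi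

noncomputable def kap3 : ℝ := -kap / 12

noncomputable def gam (n : ℕ) : ℝ := 1 / (2 * (n : ℝ) + 1)

noncomputable def eps (n : ℕ) : ℝ := 1 / ((n : ℝ) - 1)

noncomputable def alph (n : ℕ) : ℝ := 1 / 2 - gam n

noncomputable def del (n : ℕ) : ℝ := ((n : ℝ) + 2) / ((n : ℝ) - 1)

noncomputable def lam (n : ℕ) : ℝ :=
  (del n * (del n + 1) / (2 * kap) ^ n) ^ (1 / ((n : ℝ) - 1))

noncomputable def lam0 (n : ℕ) : ℝ :=
  (lam n / (2 * kap)) *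
    (-2 * (n : ℝ) * kap3 * del n * (del n + 1) - kap * (del n - 2 * eps n)) /
    (((n : ℝ) - 1) * del n * (del n + 1) + 2 * (2 * del n - 1))

def IsReactiveProfile (n : ℕ) (η : ℝ → ℝ) : Prop :=
  ContDiffOn ℝ 2 η (Set.Ici 0) ∧
  (∀ z ∈ Set.Ici (0:ℝ), 0 < η z) ∧
  (∀ z ∈ Set.Ici (0:ℝ),
    derivWithin (derivWithin η (Set.Ici 0)) (Set.Ici 0) z
      = (2 * kap * z * η z + (η z) ^ 2) ^ n) ∧
  derivWithin η (Set.Ici 0) 0 = -kap ∧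
  Filter.Tendsto η Filter.atTop (nhds 0)

/-- The corrector h: C² on [0,∞), satisfies
h'' + γη + αzη' = n(2κzη+η²)^{n−1}((2κz+2η)h + 2κ₃z³η), h'(0) = 0,
h(z) − λ₀ z^{2−δ} → 0 as z → ∞. -/
def IsCorrector (n : ℕ) (η h : ℝ → ℝ) : Prop :=
  ContDiffOn ℝ 2 h (Set.Ici 0) ∧
  (∀ z ∈ Set.Ici (0:ℝ),
    derivWithin (derivWithin h (Set.Ici 0)) (Set.Ici 0) z + gam n * η z
        + alph n * z * derivWithin η (Set.Ici 0) z
      = (n : ℝ) * (2 * kap * z * η z + (η z) ^ 2) ^ (n - 1)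
          * ((2 * kap * z + 2 * η z) * h z + 2 * kap3 * z ^ 3 * η z)) ∧
  derivWithin h (Set.Ici 0) 0 = 0 ∧
  Filter.Tendsto (fun z : ℝ => h z - lam0 n * z ^ (2 - del n)) Filter.atTop (nhds 0)

noncomputable def mu1 (y : ℝ) : ℝ :=
  (2 / Real.sqrt Real.pi) * ∫ σ in (0:ℝ)..(y / 2), Real.exp (-σ ^ 2)

def IsDiffusiveProfile (n : ℕ) (μ : ℝ → ℝ) : Prop :=
  ContDiffOn ℝ 2 μ (Set.Ioi 0) ∧
  (∀ y ∈ Set.Ioi (0:ℝ), 0 < μ y) ∧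
  (∀ y ∈ Set.Ioi (0:ℝ),
    deriv (deriv μ) y + y / 2 * deriv μ y + eps n * μ y = (2 * mu1 y * μ y) ^ n) ∧
  Filter.Tendsto (fun y : ℝ => y ^ del n * μ y) (nhdsWithin 0 (Set.Ioi 0)) (nhds (lam n)) ∧
  Filter.Tendsto (fun y : ℝ => y ^ (2 * eps n) * μ y) Filter.atTop (nhds 0)

/-- u(x,t) = −erf(x/(2√t)). -/
noncomputable def uu (x t : ℝ) : ℝ := -mu1 (x / Real.sqrt t)

/-- ū(x,t) = μ₁(|x|/√t). -/
noncomputable def ubar (x t : ℝ) : ℝ := mu1 (|x| / Real.sqrt t)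

/-- φ₁(z) = η(z) − λ z^{−δ}. -/
noncomputable def phi1 (n : ℕ) (η : ℝ → ℝ) (z : ℝ) : ℝ := η z - lam n * z ^ (-(del n))

/-- φ₂(z) = −λ₀ z^{2−δ} + h(z). -/
noncomputable def phi2 (n : ℕ) (h : ℝ → ℝ) (z : ℝ) : ℝ := -lam0 n * z ^ (2 - del n) + h z

/-- μ₃(y) = μ₂(y) − λ y^{−δ}. -/
noncomputable def mu3 (n : ℕ) (μ : ℝ → ℝ) (y : ℝ) : ℝ := μ y - lam n * y ^ (-(del n))

/-- The asymptotic profile v_∞. -/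
noncomputable def vInf (n : ℕ) (η μ h : ℝ → ℝ) (x t : ℝ) : ℝ :=
  mu1 (|x| / Real.sqrt t) + t ^ (-(eps n)) * μ (|x| / Real.sqrt t)
    + t ^ (-(gam n)) * phi1 n η (|x| / t ^ alph n)
    + t ^ (-(3 * gam n)) * phi2 n h (|x| / t ^ alph n)

/-- φ(x,t) = t^{−γ} η(|z|) + t^{−ε} μ₃(|y|) + t^{−3γ} φ₂(|z|). -/
noncomputable def phiFun (n : ℕ) (η μ h : ℝ → ℝ) (x t : ℝ) : ℝ :=
  t ^ (-(gam n)) * η (|x| / t ^ alph n) + t ^ (-(eps n)) * mu3 n μ (|x| / Real.sqrt t)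
    + t ^ (-(3 * gam n)) * phi2 n h (|x| / t ^ alph n)

/-- V_{p,q}(x,t) = C(n,p) C(p,q) (2ūφ + φ²)^{n−p} (2ū + 2φ)^{p−q}. -/
noncomputable def Vpq (n p q : ℕ) (η μ h : ℝ → ℝ) (x t : ℝ) : ℝ :=
  (n.choose p : ℝ) * (p.choose q : ℝ)
    * (2 * ubar x t * phiFun n η μ h x t + phiFun n η μ h x t ^ 2) ^ (n - p)
    * (2 * ubar x t + 2 * phiFun n η μ h x t) ^ (p - q)

/-- Decay exponents e(p,q). -/
noncomputable def epq (n p q : ℕ) : ℝ :=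
  if p = 2 ∧ q = 0 then 2 * gam n * ((n : ℝ) - 2) + 2 * gam n
  else 2 * gam n * ((n : ℝ) - (p : ℝ))

/-! Both profiles are compared with the exact solution `S(z) = λ z^{-δ}` of `m'' = (2κzm)^n`.
Dropping `η²` makes `η` a subsolution of this equation, so the supersolutions `θS + σ` give
`η ≤ θS` on `[1, ∞)` as `σ → 0`. Near the origin `2μ₁(y) = 2κy(1 + O(y²))`, and the resulting error,
like the drift and the term `εμ₂`, is absorbed by the constant in `θS ± K`; since
`μ₂ ~ S` orders `μ₂` and `θS ± K` at `0`, letting `θ → 1` gives `|μ₂ - S| ≤ K`.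

With `ζ` the variable `|x| / t^α` clamped to `[1, t^γ]` this yields `ū ≤ t^{-γ}ζ` and
`|φ| ≲ t^{-γ}ζ^{-δ}`, hence `|2ūφ + φ²| ≲ t^{-2γ}ζ^{1-δ}` and `|2ū + 2φ| ≲ t^{-γ}ζ ≤ 1`. As `δ > 1`
the powers of `ζ` can be discarded; for `(p, q) = (2, 0)` the two factors `t^{-γ}ζ` are kept, and
`ζ` then carries the exponent `(n - 2)(1 - δ) + 2 = δ - 2`, which is nonpositive for `n ≥ 4`. -/

open Filter Set Topology

/-! ### A second-order comparison principle -/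

lemma deriv_deriv_nonpos_of_isLocalMax {f : ℝ → ℝ} {x : ℝ} (hf : ContinuousAt f x)
    (hmax : IsLocalMax f x) : deriv (deriv f) x ≤ 0 := by
  by_contra! hpos
  have hmin : IsLocalMin f x := isLocalMin_of_deriv_deriv_pos hpos hmax.deriv_eq_zero hf
  have hconst : f =ᶠ[𝓝 x] fun _ ↦ f x := by
    filter_upwards [hmax, hmin] with y using le_antisymm
  have hzero : deriv (deriv f) x = 0 := by simpa using hconst.deriv.deriv_eq
  exact hpos.ne' hzero

lemma deriv_deriv_sub {f g : ℝ → ℝ} {x : ℝ} (hf : ContDiffAt ℝ 2 f x) (hg : ContDiffAt ℝ 2 g x) :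
    deriv (deriv (f - g)) x = deriv (deriv f) x - deriv (deriv g) x := by
  simpa [iteratedDeriv_succ] using iteratedDeriv_sub hf hg

lemma le_on_Icc_of_deriv_deriv_lt {f g : ℝ → ℝ} {a b : ℝ}
    (hf : ContinuousOn f (Icc a b)) (hg : ContinuousOn g (Icc a b))
    (hf₂ : ∀ x ∈ Ioo a b, ContDiffAt ℝ 2 f x) (hg₂ : ∀ x ∈ Ioo a b, ContDiffAt ℝ 2 g x)
    (ha : f a ≤ g a) (hb : f b ≤ g b)
    (hlt : ∀ x ∈ Ioo a b, g x < f x → deriv f x = deriv g x →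
      deriv (deriv g) x < deriv (deriv f) x) :
    ∀ x ∈ Icc a b, f x ≤ g x := by
  intro x hx
  obtain ⟨m, hm, hmax⟩ := isCompact_Icc.exists_isMaxOn ⟨x, hx⟩ (hf.sub hg)
  by_contra! hgf
  have hm_pos : g m < f m := by
    have : f x - g x ≤ f m - g m := hmax hx
    linarith
  have hm' : m ∈ Ioo a b :=
    ⟨hm.1.lt_of_ne (by rintro rfl; exact hm_pos.not_ge ha),
      hm.2.lt_of_ne (by rintro rfl; exact hm_pos.not_ge hb)⟩
  have hloc : IsLocalMax (f - g) m := hmax.isLocalMax (Icc_mem_nhds hm'.1 hm'.2)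
  have hfm := hf₂ m hm'
  have hgm := hg₂ m hm'
  have htouch : deriv f m = deriv g m := by
    rw [← sub_eq_zero, ← hloc.deriv_eq_zero]
    exact (deriv_sub (hfm.differentiableAt two_ne_zero) (hgm.differentiableAt two_ne_zero)).symm
  have hconcave : deriv (deriv (f - g)) m ≤ 0 :=
    deriv_deriv_nonpos_of_isLocalMax (hfm.sub hgm).continuousAt hloc
  rw [deriv_deriv_sub hfm hgm] at hconcave
  linarith [hlt m hm' hm_pos htouch]

lemma le_on_Ioc_of_deriv_deriv_lt {f g : ℝ → ℝ} {a b : ℝ}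
    (hf : ∀ x ∈ Ioc a b, ContDiffAt ℝ 2 f x) (hg : ∀ x ∈ Ioc a b, ContDiffAt ℝ 2 g x)
    (ha : ∀ᶠ x in 𝓝[>] a, f x ≤ g x) (hb : f b ≤ g b)
    (hlt : ∀ x ∈ Ioo a b, g x < f x → deriv f x = deriv g x →
      deriv (deriv g) x < deriv (deriv f) x) :
    ∀ x ∈ Ioc a b, f x ≤ g x := by
  intro x hx
  obtain ⟨c, hc, hac, hcx⟩ := (ha.and (Ioo_mem_nhdsGT hx.1)).exists
  have hIcc : Icc c b ⊆ Ioc a b := Icc_subset_Ioc hac le_rfl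
  have hIoo : Ioo c b ⊆ Ioo a b := Ioo_subset_Ioo_left hac.le
  exact le_on_Icc_of_deriv_deriv_lt
    (fun y hy ↦ (hf y (hIcc hy)).continuousAt.continuousWithinAt)
    (fun y hy ↦ (hg y (hIcc hy)).continuousAt.continuousWithinAt)
    (fun y hy ↦ hf y (Ioo_subset_Ioc_self (hIoo hy)))
    (fun y hy ↦ hg y (Ioo_subset_Ioc_self (hIoo hy)))
    hc hb (fun y hy ↦ hlt y (hIoo hy)) x ⟨hcx.le, hx.2⟩

lemma exists_norm_le_on_Ici_of_tendsto {E : Type*} [SeminormedAddCommGroup E] {f : ℝ → E} {a : ℝ}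
    {l : E} (hf : ContinuousOn f (Ici a)) (hlim : Tendsto f atTop (𝓝 l)) :
    ∃ M, ∀ x ∈ Ici a, ‖f x‖ ≤ M := by
  obtain ⟨b, hb⟩ := eventually_atTop.mp <|
    hlim.norm.eventually_le_const (lt_add_one ‖l‖)
  obtain ⟨M, hM⟩ := isCompact_Icc.exists_bound_of_continuousOn
    (hf.mono (Icc_subset_Ici_self : Icc a b ⊆ Ici a))
  refine ⟨max M (‖l‖ + 1), fun x hx ↦ ?_⟩
  rcases le_total x b with hxb | hbx
  · exact le_max_of_le_left (hM x ⟨hx, hxb⟩)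
  · exact le_max_of_le_right (hb x hbx)

/-! ### Constants -/

lemma kap_pos : 0 < kap := by unfold kap; positivity

lemma kap_le_one : kap ≤ 1 :=
  div_le_one_of_le₀ (Real.one_le_sqrt.mpr (by linarith [Real.pi_gt_three])) (Real.sqrt_nonneg _)

lemma gam_pos (n : ℕ) : 0 < gam n := by unfold gam; positivity

section Exponents

variable {n : ℕ}

lemma eps_pos (hn : 2 ≤ n) : 0 < eps n := by
  have : (2 : ℝ) ≤ n := by exact_mod_cast hn
  exact one_div_pos.mpr (by linarith)

lemma eps_le_one (hn : 2 ≤ n) : eps n ≤ 1 := by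
  have : (2 : ℝ) ≤ n := by exact_mod_cast hn
  exact div_le_one_of_le₀ (by linarith) (by linarith)

lemma del_mul_sub_one (hn : 2 ≤ n) : del n * (n - 1) = n + 2 := by
  have : (2 : ℝ) ≤ n := by exact_mod_cast hn
  exact div_mul_cancel₀ _ (by linarith)

lemma one_lt_del (hn : 2 ≤ n) : 1 < del n := by
  have : (2 : ℝ) ≤ n := by exact_mod_cast hn
  exact (one_lt_div (by linarith)).mpr (by linarith)

lemma del_le_two (hn : 4 ≤ n) : del n ≤ 2 := by
  have : (4 : ℝ) ≤ n := by exact_mod_cast hn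
  exact (div_le_iff₀ (by linarith)).mpr (by linarith)

lemma one_le_del_mul (hn : 2 ≤ n) : 1 ≤ del n * (del n + 1) := by
  nlinarith [one_lt_del hn]

lemma gam_mul_one_add_del (hn : 2 ≤ n) : gam n * (1 + del n) = eps n := by
  have : (2 : ℝ) ≤ n := by exact_mod_cast hn
  have : (n : ℝ) - 1 ≠ 0 := by linarith
  unfold gam del eps
  field_simp
  ring

lemma eps_le_three_mul_gam (hn : 4 ≤ n) : eps n ≤ 3 * gam n := by
  rw [← gam_mul_one_add_del (by omega)]
  nlinarith [gam_pos n, del_le_two hn]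

lemma lam_pos (hn : 2 ≤ n) : 0 < lam n := by
  have := kap_pos
  have := one_le_del_mul hn
  unfold lam
  positivity

lemma lam_pow_mul (hn : 2 ≤ n) : lam n ^ (n - 1) * (2 * kap) ^ n = del n * (del n + 1) := by
  have hk := kap_pos
  have hD := one_le_del_mul hn
  have hcast : (n : ℝ) - 1 = (n - 1 : ℕ) := by rw [Nat.cast_sub (by omega), Nat.cast_one]
  rw [lam, hcast, one_div, Real.rpow_inv_natCast_pow (by positivity) (by omega)]
  exact div_mul_cancel₀ _ (by positivity)

end Exponents

/-! ### The error function -/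

section ErrorFunction

variable {y : ℝ}

lemma mu1_eq (y : ℝ) : mu1 y = 2 * kap * ∫ σ in (0 : ℝ)..y / 2, Real.exp (-σ ^ 2) := by
  unfold mu1 kap
  ring

lemma intervalIntegrable_exp_neg_sq (a b : ℝ) :
    IntervalIntegrable (fun σ : ℝ ↦ Real.exp (-σ ^ 2)) MeasureTheory.volume a b :=
  Continuous.intervalIntegrable (by fun_prop) a b

lemma mu1_nonneg (hy : 0 ≤ y) : 0 ≤ mu1 y :=
  mul_nonneg (by positivity) <|
    intervalIntegral.integral_nonneg (by positivity) fun _ _ ↦ (Real.exp_pos _).le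

lemma mu1_le_one (hy : 0 ≤ y) : mu1 y ≤ 1 := by
  have hgauss : ∫ σ in Ioi (0 : ℝ), Real.exp (-σ ^ 2) = √Real.pi / 2 := by
    simpa using integral_gaussian_Ioi 1
  have hint : MeasureTheory.Integrable fun σ : ℝ ↦ Real.exp (-σ ^ 2) := by
    simpa using integrable_exp_neg_mul_sq one_pos
  have hle : ∫ σ in (0 : ℝ)..y / 2, Real.exp (-σ ^ 2) ≤ √Real.pi / 2 := by
    rw [intervalIntegral.integral_of_le (by positivity), ← hgauss]
    exact MeasureTheory.setIntegral_mono_set hint.integrableOn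
      (.of_forall fun _ ↦ (Real.exp_pos _).le) Ioc_subset_Ioi_self.eventuallyLE
  calc mu1 y ≤ 2 / √Real.pi * (√Real.pi / 2) := by unfold mu1; gcongr
    _ = 1 := by field_simp

lemma mu1_le_kap_mul (hy : 0 ≤ y) : mu1 y ≤ kap * y := by
  have hle : ∫ σ in (0 : ℝ)..y / 2, Real.exp (-σ ^ 2) ≤ ∫ _ in (0 : ℝ)..y / 2, (1 : ℝ) :=
    intervalIntegral.integral_mono_on (by positivity) (intervalIntegrable_exp_neg_sq _ _)
      intervalIntegrable_const fun σ _ ↦ Real.exp_le_one_iff.mpr (by nlinarith [sq_nonneg σ])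
  rw [mu1_eq]
  calc 2 * kap * ∫ σ in (0 : ℝ)..y / 2, Real.exp (-σ ^ 2)
      ≤ 2 * kap * ∫ _ in (0 : ℝ)..y / 2, (1 : ℝ) := by have := kap_pos; gcongr
    _ = kap * y := by rw [intervalIntegral.integral_const, smul_eq_mul]; ring

lemma kap_mul_exp_le_mu1 (hy : 0 ≤ y) : kap * y * Real.exp (-(y / 2) ^ 2) ≤ mu1 y := by
  have hle : ∫ _ in (0 : ℝ)..y / 2, Real.exp (-(y / 2) ^ 2)
      ≤ ∫ σ in (0 : ℝ)..y / 2, Real.exp (-σ ^ 2) :=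
    intervalIntegral.integral_mono_on (by positivity) intervalIntegrable_const
      (intervalIntegrable_exp_neg_sq _ _) fun σ ⟨hσ, hσy⟩ ↦ by gcongr
  rw [mu1_eq]
  calc kap * y * Real.exp (-(y / 2) ^ 2)
      = 2 * kap * ∫ _ in (0 : ℝ)..y / 2, Real.exp (-(y / 2) ^ 2) := by
        rw [intervalIntegral.integral_const, smul_eq_mul]; ring
    _ ≤ 2 * kap * ∫ σ in (0 : ℝ)..y / 2, Real.exp (-σ ^ 2) := by have := kap_pos; gcongr

lemma two_mul_mu1_pow_le (n : ℕ) (hy : 0 ≤ y) : (2 * mu1 y) ^ n ≤ (2 * kap * y) ^ n :=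
  pow_le_pow_left₀ (by linarith [mu1_nonneg hy]) (by linarith [mu1_le_kap_mul hy]) n

lemma le_two_mul_mu1_pow (n : ℕ) (hy : 0 ≤ y) :
    (1 - n * y ^ 2) * (2 * kap * y) ^ n ≤ (2 * mu1 y) ^ n := by
  have hk := kap_pos
  have hexp : 1 - n * y ^ 2 ≤ Real.exp (-(y / 2) ^ 2) ^ n := by
    have hn : (0 : ℝ) ≤ n * y ^ 2 := by positivity
    rw [← Real.exp_nat_mul]
    linarith [Real.add_one_le_exp (n * -(y / 2) ^ 2)]
  calc (1 - n * y ^ 2) * (2 * kap * y) ^ n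
      ≤ Real.exp (-(y / 2) ^ 2) ^ n * (2 * kap * y) ^ n := by gcongr
    _ = (2 * (kap * y * Real.exp (-(y / 2) ^ 2))) ^ n := by rw [← mul_pow]; ring
    _ ≤ (2 * mu1 y) ^ n := by gcongr; exact kap_mul_exp_le_mu1 hy

end ErrorFunction

/-! ### The singular profile and its barriers -/

/-- The profile `λ z^{-δ}` shared by the tail of `η` and the singularity of `μ₂`; it solves
`m'' = (2κzm)^n` exactly. -/
noncomputable def singularProfile (n : ℕ) (z : ℝ) : ℝ := lam n * z ^ (-del n)

/-- A multiple of the singular profile shifted by a constant, `θ λ z^{-δ} + K`: the sub- and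
supersolutions of the comparison arguments. -/
noncomputable def barrier (n : ℕ) (θ K z : ℝ) : ℝ := θ * singularProfile n z + K

section Barriers

variable {n : ℕ} {θ K z m : ℝ}

lemma singularProfile_pos (hn : 2 ≤ n) (hz : 0 < z) : 0 < singularProfile n z :=
  mul_pos (lam_pos hn) (Real.rpow_pos_of_pos hz _)

lemma contDiffAt_barrier (hz : z ≠ 0) : ContDiffAt ℝ 2 (barrier n θ K) z :=
  (contDiffAt_const.mul
    (contDiffAt_const.mul (Real.contDiffAt_rpow_const_of_ne hz))).add contDiffAt_const

lemma deriv_barrier_eq :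
    deriv (barrier n θ K) = fun z ↦ θ * (lam n * (-del n * z ^ (-del n - 1))) := by
  unfold barrier singularProfile
  ext z
  simp only [deriv_add_const, deriv_const_mul_field, Real.deriv_rpow_const]

lemma deriv_barrier (hz : z ≠ 0) :
    deriv (barrier n θ K) z = -(del n * (θ * singularProfile n z) / z) := by
  simp only [deriv_barrier_eq, singularProfile, Real.rpow_sub_one hz]
  ring

lemma deriv_deriv_barrier (hz : z ≠ 0) : deriv (deriv (barrier n θ K)) z =
    del n * (del n + 1) / z ^ 2 * (θ * singularProfile n z) := by
  simp only [deriv_barrier_eq, deriv_const_mul_field, Real.deriv_rpow_const]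
  rw [singularProfile, Real.rpow_sub_one hz, Real.rpow_sub_one hz]
  ring

lemma mul_pow_mul_singularProfile_pow (hn : 2 ≤ n) (hz : 0 < z) :
    (2 * kap * z) ^ n * singularProfile n z ^ (n - 1) = del n * (del n + 1) / z ^ 2 := by
  have hscale : z ^ n * (z ^ (-del n)) ^ (n - 1) = (z ^ 2)⁻¹ := by
    rw [← Real.rpow_natCast z n, ← Real.rpow_natCast z 2, ← Real.rpow_mul_natCast hz.le,
      ← Real.rpow_add hz, ← Real.rpow_neg hz.le]
    congr 1
    push_cast [Nat.cast_sub (show 1 ≤ n by omega)]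
    linarith [del_mul_sub_one hn]
  calc (2 * kap * z) ^ n * singularProfile n z ^ (n - 1)
      = lam n ^ (n - 1) * (2 * kap) ^ n * (z ^ n * (z ^ (-del n)) ^ (n - 1)) := by
        rw [singularProfile, mul_pow _ z, mul_pow (lam n)]; ring
    _ = del n * (del n + 1) / z ^ 2 := by rw [hscale, lam_pow_mul hn, div_eq_mul_inv]

lemma mul_le_pow_of_singularProfile_le (hn : 2 ≤ n) (hz : 0 < z) (hm : singularProfile n z ≤ m) :
    del n * (del n + 1) / z ^ 2 * m ≤ (2 * kap * z * m) ^ n := by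
  have hk := kap_pos
  have hS := singularProfile_pos hn hz
  have hm₀ : 0 < m := hS.trans_le hm
  calc del n * (del n + 1) / z ^ 2 * m
      = (2 * kap * z) ^ n * singularProfile n z ^ (n - 1) * m := by
        rw [mul_pow_mul_singularProfile_pow hn hz]
    _ ≤ (2 * kap * z) ^ n * m ^ (n - 1) * m := by gcongr
    _ = (2 * kap * z * m) ^ n := by
        rw [mul_pow _ m, mul_assoc, pow_sub_one_mul (by omega)]

lemma pow_le_mul_of_le_singularProfile (hn : 2 ≤ n) (hz : 0 < z) (hm₀ : 0 ≤ m)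
    (hm : m ≤ singularProfile n z) :
    (2 * kap * z * m) ^ n ≤ del n * (del n + 1) / z ^ 2 * m := by
  have hk := kap_pos
  calc (2 * kap * z * m) ^ n = (2 * kap * z) ^ n * m ^ (n - 1) * m := by
        rw [mul_pow _ m, mul_assoc (_ ^ n), pow_sub_one_mul (by omega)]
    _ ≤ (2 * kap * z) ^ n * singularProfile n z ^ (n - 1) * m := by gcongr
    _ = del n * (del n + 1) / z ^ 2 * m := by rw [mul_pow_mul_singularProfile_pow hn hz]

lemma sq_mul_singularProfile_le (hn : 4 ≤ n) (hz : 0 < z) (hz₁ : z ≤ 1) :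
    z ^ 2 * singularProfile n z ≤ lam n := by
  have hrpow : z ^ 2 * z ^ (-del n) ≤ 1 := by
    rw [← Real.rpow_natCast, ← Real.rpow_add hz]
    exact Real.rpow_le_one hz.le hz₁ (by push_cast; linarith [del_le_two hn])
  calc z ^ 2 * singularProfile n z = lam n * (z ^ 2 * z ^ (-del n)) := by
        rw [singularProfile]; ring
    _ ≤ lam n := mul_le_of_le_one_right (lam_pos (by omega)).le hrpow

end Barriers

/-! ### Decay of the reactive profile -/

/-- Nonnegative decaying subsolutions of the reactive profile equation, with no boundary condition
imposed at `0`; only the part `(2κzη)^n` of the nonlinearity is retained. -/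
structure IsReactiveSubsolution (n : ℕ) (η : ℝ → ℝ) : Prop where
  continuousOn : ContinuousOn η (Ici 0)
  contDiffOn : ContDiffOn ℝ 2 η (Ioi 0)
  nonneg : ∀ z ∈ Ici 0, 0 ≤ η z
  le_deriv_deriv : ∀ z ∈ Ioi 0, (2 * kap * z * η z) ^ n ≤ deriv (deriv η) z
  tendsto_zero : Tendsto η atTop (𝓝 0)

lemma IsReactiveProfile.deriv_deriv {n : ℕ} {η : ℝ → ℝ} (hη : IsReactiveProfile n η) {z : ℝ}
    (hz : 0 < z) : deriv (deriv η) z = (2 * kap * z * η z + η z ^ 2) ^ n := by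
  have hderiv (f : ℝ → ℝ) {x : ℝ} (hx : 0 < x) : derivWithin f (Ici 0) x = deriv f x :=
    derivWithin_of_mem_nhds (Ici_mem_nhds hx)
  rw [← hη.2.2.1 z hz.le, hderiv _ hz]
  refine EventuallyEq.deriv_eq ?_
  filter_upwards [lt_mem_nhds hz] with x hx using (hderiv η hx).symm

lemma IsReactiveProfile.isReactiveSubsolution {n : ℕ} {η : ℝ → ℝ} (hη : IsReactiveProfile n η) :
    IsReactiveSubsolution n η where
  continuousOn := hη.1.continuousOn
  contDiffOn := hη.1.mono Ioi_subset_Ici_self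
  nonneg z hz := (hη.2.1 z hz).le
  le_deriv_deriv z hz := by
    have hk := kap_pos
    have hz₀ : 0 < z := hz
    have hη₀ : 0 < η z := hη.2.1 z hz₀.le
    rw [hη.deriv_deriv hz]
    gcongr
    exact le_add_of_nonneg_right (sq_nonneg _)
  tendsto_zero := hη.2.2.2.2

namespace IsReactiveSubsolution

variable {n : ℕ} {η : ℝ → ℝ}

lemma le_mul_singularProfile (hη : IsReactiveSubsolution n η) (hn : 2 ≤ n) {θ : ℝ} (hθ : 1 ≤ θ)
    (hη₁ : η 1 ≤ θ * lam n) {z : ℝ} (hz : 1 ≤ z) : η z ≤ θ * singularProfile n z := by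
  refine le_of_forall_pos_le_add fun σ hσ ↦ ?_
  obtain ⟨b, hbσ, hzb⟩ : ∃ b, η b < σ ∧ z ≤ b :=
    ((hη.tendsto_zero.eventually_lt_const hσ).and (eventually_ge_atTop z)).exists
  have hη₂ (x : ℝ) (hx : 1 ≤ x) : ContDiffAt ℝ 2 η x :=
    hη.contDiffOn.contDiffAt (Ioi_mem_nhds (by linarith))
  have hbar (x : ℝ) (hx : 1 ≤ x) : ContDiffAt ℝ 2 (barrier n θ σ) x :=
    contDiffAt_barrier (by linarith)
  refine le_on_Icc_of_deriv_deriv_lt (a := 1) (b := b) (g := barrier n θ σ)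
    (fun x hx ↦ (hη₂ x hx.1).continuousAt.continuousWithinAt)
    (fun x hx ↦ (hbar x hx.1).continuousAt.continuousWithinAt)
    (fun x hx ↦ hη₂ x hx.1.le) (fun x hx ↦ hbar x hx.1.le) ?_ ?_ ?_ z ⟨hz, hzb⟩
  · simp only [barrier, singularProfile, Real.one_rpow, mul_one]
    linarith
  · have := singularProfile_pos hn (show 0 < b by linarith)
    have : 0 < θ * singularProfile n b := by positivity
    rw [barrier]
    linarith
  · intro x hx hlt _
    have hx₀ : 0 < x := by linarith [hx.1]
    have hS := singularProfile_pos hn hx₀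
    have hD := one_le_del_mul hn
    have hθη : θ * singularProfile n x < η x := (lt_add_of_pos_right _ hσ).trans hlt
    have hη_ge : singularProfile n x ≤ η x :=
      (le_mul_of_one_le_left hS.le hθ).trans hθη.le
    calc deriv (deriv (barrier n θ σ)) x
        = del n * (del n + 1) / x ^ 2 * (θ * singularProfile n x) := deriv_deriv_barrier hx₀.ne'
      _ < del n * (del n + 1) / x ^ 2 * η x := by gcongr
      _ ≤ (2 * kap * x * η x) ^ n := mul_le_pow_of_singularProfile_le hn hx₀ hη_ge
      _ ≤ deriv (deriv η) x := hη.le_deriv_deriv x hx₀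

lemma exists_abs_le (hη : IsReactiveSubsolution n η) (hn : 2 ≤ n) :
    ∃ M, 0 < M ∧ ∀ z ∈ Ici 0, |η z| ≤ M * max 1 z ^ (-del n) := by
  obtain ⟨B, hB⟩ := exists_norm_le_on_Ici_of_tendsto hη.continuousOn hη.tendsto_zero
  have hlam := lam_pos hn
  set θ := max 1 (B / lam n)
  have hBθ : B ≤ θ * lam n := (div_le_iff₀ hlam).mp (le_max_right _ _)
  have hη_le (z : ℝ) (hz : z ∈ Ici 0) : η z ≤ θ * lam n :=
    ((le_abs_self _).trans (hB z hz)).trans hBθ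
  refine ⟨θ * lam n, by positivity, fun z hz ↦ ?_⟩
  rw [abs_of_nonneg (hη.nonneg z hz)]
  rcases le_total z 1 with hz₁ | hz₁
  · simpa only [max_eq_left hz₁, Real.one_rpow, mul_one] using hη_le z hz
  · rw [max_eq_right hz₁, mul_assoc]
    exact hη.le_mul_singularProfile hn (le_max_left _ _) (hη_le 1 (mem_Ici.mpr zero_le_one)) hz₁

end IsReactiveSubsolution

/-! ### Boundedness of the diffusive remainder -/

section Diffusive

variable {n : ℕ} {θ K y m : ℝ}

lemma two_mul_mu1_mul_pow_le (hn : 2 ≤ n) (hy : 0 < y) (hm₀ : 0 ≤ m)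
    (hm : m ≤ singularProfile n y) :
    (2 * mu1 y * m) ^ n ≤ del n * (del n + 1) / y ^ 2 * m := by
  calc (2 * mu1 y * m) ^ n = (2 * mu1 y) ^ n * m ^ n := mul_pow _ _ _
    _ ≤ (2 * kap * y) ^ n * m ^ n :=
        mul_le_mul_of_nonneg_right (two_mul_mu1_pow_le n hy.le) (by positivity)
    _ = (2 * kap * y * m) ^ n := (mul_pow _ _ _).symm
    _ ≤ del n * (del n + 1) / y ^ 2 * m := pow_le_mul_of_le_singularProfile hn hy hm₀ hm

lemma mul_le_two_mul_mu1_mul_pow (hn : 2 ≤ n) (hy : 0 < y) (hny : n * y ^ 2 ≤ 1)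
    (hm : singularProfile n y ≤ m) :
    (1 - n * y ^ 2) * (del n * (del n + 1) / y ^ 2 * m) ≤ (2 * mu1 y * m) ^ n := by
  have hm₀ : 0 < m := (singularProfile_pos hn hy).trans_le hm
  calc (1 - n * y ^ 2) * (del n * (del n + 1) / y ^ 2 * m)
      ≤ (1 - n * y ^ 2) * (2 * kap * y * m) ^ n :=
        mul_le_mul_of_nonneg_left (mul_le_pow_of_singularProfile_le hn hy hm) (by linarith)
    _ = (1 - n * y ^ 2) * (2 * kap * y) ^ n * m ^ n := by rw [mul_pow _ m]; ring
    _ ≤ (2 * mu1 y) ^ n * m ^ n := by gcongr; exact le_two_mul_mu1_pow n hy.le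
    _ = (2 * mu1 y * m) ^ n := (mul_pow _ _ _).symm

lemma deriv_deriv_barrier_lt (hn : 4 ≤ n) (hy : 0 < y) (hy₁ : y ≤ 1 / (n + 1)) (hθ : 1 ≤ θ)
    (hθ₂ : θ ≤ 2) (hK : 4 * (n + 1) * lam n < K) (hm : barrier n θ K y ≤ m) :
    deriv (deriv (barrier n θ K)) y
      < (2 * mu1 y * m) ^ n - y / 2 * deriv (barrier n θ K) y - eps n * m := by
  have hn₂ : 2 ≤ n := by omega
  have hn₄ : (4 : ℝ) ≤ n := by exact_mod_cast hn
  have hlam := lam_pos hn₂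
  have hδ := one_lt_del hn₂
  have hS := singularProfile_pos hn₂ hy
  have hD := one_le_del_mul hn₂
  have hε := eps_le_one hn₂
  have hK₀ : 0 < K := lt_trans (by positivity) hK
  set D := del n * (del n + 1)
  set S := singularProfile n y
  have hSm : S ≤ m := by
    rw [barrier] at hm
    nlinarith
  have hy_le_one : y ≤ 1 := hy₁.trans (div_le_one_of_le₀ (by linarith) (by linarith))
  have hny : (n + 1) * y ≤ 1 := by rwa [mul_comm, ← le_div_iff₀ (by linarith)]
  have hny₂ : (n + 1) * y ^ 2 ≤ 1 / 2 := by nlinarith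
  have hdrift : 0 ≤ -(y / 2 * deriv (barrier n θ K) y) := by
    rw [deriv_barrier hy.ne', mul_neg, neg_neg]
    positivity
  have hreaction : (1 - n * y ^ 2) * (D / y ^ 2 * m) ≤ (2 * mu1 y * m) ^ n :=
    mul_le_two_mul_mu1_mul_pow hn₂ hy (by nlinarith) hSm
  have habsorb : D / y ^ 2 * (θ * S) < (1 - n * y ^ 2) * (D / y ^ 2 * m) - eps n * m := by
    have hDy : D / y ^ 2 * y ^ 2 = D := div_mul_cancel₀ _ (by positivity)
    have hgap : θ * S < (1 - (n + 1) * y ^ 2) * (θ * S + K) := by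
      have : y ^ 2 * (θ * S) ≤ 2 * lam n := by
        nlinarith [sq_mul_singularProfile_le hn hy hy_le_one]
      nlinarith
    calc D / y ^ 2 * (θ * S) < D / y ^ 2 * ((1 - (n + 1) * y ^ 2) * (θ * S + K)) := by gcongr
      _ ≤ D / y ^ 2 * ((1 - (n + 1) * y ^ 2) * m) := by
          gcongr
          · linarith
          · exact hm
      _ = (1 - n * y ^ 2) * (D / y ^ 2 * m) - D * m := by linear_combination -m * hDy
      _ ≤ (1 - n * y ^ 2) * (D / y ^ 2 * m) - eps n * m := by
          have : 0 < m := hS.trans_le hSm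
          gcongr
          linarith
  rw [deriv_deriv_barrier hy.ne']
  linarith

lemma lt_deriv_deriv_barrier (hn : 4 ≤ n) (hy : 0 < y) (hy₁ : y ≤ 1) (hθ : θ ≤ 1) (hK : lam n < K)
    (hm₀ : 0 ≤ m) (hm : m ≤ barrier n θ (-K) y) :
    (2 * mu1 y * m) ^ n - y / 2 * deriv (barrier n θ (-K)) y - eps n * m
      < deriv (deriv (barrier n θ (-K))) y := by
  have hn₂ : 2 ≤ n := by omega
  have hlam := lam_pos hn₂
  have hδ := one_lt_del hn₂
  have hS := singularProfile_pos hn₂ hy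
  have hεm : 0 ≤ eps n * m := mul_nonneg (eps_pos hn₂).le hm₀
  set D := del n * (del n + 1) with hD
  set S := singularProfile n y
  have hm_le : m ≤ θ * S - K := hm
  have hθS : 0 < θ * S := by linarith
  have hDy : D / y ^ 2 * y ^ 2 = D := div_mul_cancel₀ _ (by positivity)
  have hreaction : (2 * mu1 y * m) ^ n ≤ D / y ^ 2 * m :=
    two_mul_mu1_mul_pow_le hn₂ hy hm₀ (by nlinarith)
  have hdrift : y / 2 * deriv (barrier n θ (-K)) y = -(del n / 2 * (θ * S)) := by
    rw [deriv_barrier hy.ne']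
    field_simp
    rfl
  have habsorb : del n / 2 * (θ * S) < D / y ^ 2 * K := by
    have hyθS : y ^ 2 * (θ * S) < K := by
      have := sq_mul_singularProfile_le hn hy hy₁
      nlinarith [mul_pos (pow_pos hy 2) hS]
    have hDδ : del n / 2 ≤ D := by rw [hD]; nlinarith
    calc del n / 2 * (θ * S) ≤ D * (θ * S) := by gcongr
      _ = D / y ^ 2 * (y ^ 2 * (θ * S)) := by linear_combination -(θ * S) * hDy
      _ < D / y ^ 2 * K := by gcongr
  have hDm : D / y ^ 2 * m ≤ D / y ^ 2 * (θ * S - K) := by gcongr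
  rw [hdrift, deriv_deriv_barrier hy.ne']
  linarith

end Diffusive

namespace IsDiffusiveProfile

variable {n : ℕ} {μ : ℝ → ℝ} {θ K : ℝ}

lemma contDiffAt (hμ : IsDiffusiveProfile n μ) {y : ℝ} (hy : 0 < y) : ContDiffAt ℝ 2 μ y :=
  hμ.1.contDiffAt (Ioi_mem_nhds hy)

lemma deriv_deriv (hμ : IsDiffusiveProfile n μ) {y : ℝ} (hy : 0 < y) :
    deriv (deriv μ) y = (2 * mu1 y * μ y) ^ n - y / 2 * deriv μ y - eps n * μ y := by
  linarith [hμ.2.2.1 y hy]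

lemma tendsto_div_singularProfile (hμ : IsDiffusiveProfile n μ) (hn : 2 ≤ n) :
    Tendsto (fun y ↦ μ y / singularProfile n y) (𝓝[>] 0) (𝓝 1) := by
  have hlim := hμ.2.2.2.1.div_const (lam n)
  rw [div_self (lam_pos hn).ne'] at hlim
  refine hlim.congr' ?_
  filter_upwards [self_mem_nhdsWithin] with y hy
  rw [singularProfile, Real.rpow_neg (le_of_lt hy)]
  field_simp

lemma le_barrier (hμ : IsDiffusiveProfile n μ) (hn : 4 ≤ n) (hθ : 1 < θ) (hθ₂ : θ ≤ 2)
    (hK : 4 * (n + 1) * lam n < K) (hb : mu3 n μ (1 / (n + 1)) ≤ K) :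
    ∀ y ∈ Ioc 0 (1 / (n + 1) : ℝ), μ y ≤ barrier n θ K y := by
  have hn₂ : 2 ≤ n := by omega
  have hlam := lam_pos hn₂
  have hK₀ : 0 < K := lt_trans (by positivity) hK
  refine le_on_Ioc_of_deriv_deriv_lt (fun y hy ↦ hμ.contDiffAt hy.1)
    (fun y hy ↦ contDiffAt_barrier hy.1.ne') ?_ ?_ ?_
  · filter_upwards [(hμ.tendsto_div_singularProfile hn₂).eventually_lt_const hθ,
      self_mem_nhdsWithin] with y hlt hy
    rw [div_lt_iff₀ (singularProfile_pos hn₂ hy)] at hlt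
    rw [barrier]
    linarith
  · have hS : 0 < singularProfile n (1 / (n + 1)) := singularProfile_pos hn₂ (by positivity)
    have hb' : μ (1 / (n + 1)) - singularProfile n (1 / (n + 1)) ≤ K := hb
    rw [barrier]
    nlinarith
  · intro y hy hlt htouch
    rw [hμ.deriv_deriv hy.1, htouch]
    exact deriv_deriv_barrier_lt hn hy.1 hy.2.le hθ.le hθ₂ hK hlt.le

lemma barrier_le (hμ : IsDiffusiveProfile n μ) (hn : 4 ≤ n) (hθ : θ < 1) (hK : lam n < K)
    (hb : -K ≤ mu3 n μ (1 / (n + 1))) :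
    ∀ y ∈ Ioc 0 (1 / (n + 1) : ℝ), barrier n θ (-K) y ≤ μ y := by
  have hn₂ : 2 ≤ n := by omega
  have hK₀ : 0 < K := (lam_pos hn₂).trans hK
  refine le_on_Ioc_of_deriv_deriv_lt (fun y hy ↦ contDiffAt_barrier hy.1.ne')
    (fun y hy ↦ hμ.contDiffAt hy.1) ?_ ?_ ?_
  · filter_upwards [(hμ.tendsto_div_singularProfile hn₂).eventually_const_lt hθ,
      self_mem_nhdsWithin] with y hlt hy
    rw [lt_div_iff₀ (singularProfile_pos hn₂ hy)] at hlt
    rw [barrier]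
    linarith
  · have hS : 0 < singularProfile n (1 / (n + 1)) := singularProfile_pos hn₂ (by positivity)
    have hb' : -K ≤ μ (1 / (n + 1)) - singularProfile n (1 / (n + 1)) := hb
    rw [barrier]
    nlinarith
  · intro y hy hlt htouch
    have hy₁ : y ≤ 1 := hy.2.le.trans (div_le_one_of_le₀ (by linarith) (by positivity))
    rw [hμ.deriv_deriv hy.1, ← htouch]
    exact lt_deriv_deriv_barrier hn hy.1 hy₁ hθ.le hK (hμ.2.1 y hy.1).le hlt.le

lemma abs_mu3_le (hμ : IsDiffusiveProfile n μ) (hn : 4 ≤ n) (hK : 4 * (n + 1) * lam n < K)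
    (hb : |mu3 n μ (1 / (n + 1))| ≤ K) : ∀ y ∈ Ioc 0 (1 / (n + 1) : ℝ), |mu3 n μ y| ≤ K := by
  intro y hy
  have hlam := lam_pos (show 2 ≤ n by omega)
  have hlamK : lam n < K := by nlinarith
  have hlim (K : ℝ) : Tendsto (fun θ ↦ barrier n θ K y) (𝓝 1) (𝓝 (singularProfile n y + K)) := by
    have hcont : Continuous fun θ ↦ barrier n θ K y := by unfold barrier; fun_prop
    simpa only [barrier, one_mul] using hcont.tendsto 1
  have hupper : μ y ≤ singularProfile n y + K := by
    refine ge_of_tendsto ((hlim K).mono_left (nhdsWithin_le_nhds (s := Ioi 1))) ?_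
    filter_upwards [Ioc_mem_nhdsGT one_lt_two] with θ hθ
    exact hμ.le_barrier hn hθ.1 hθ.2 hK (abs_le.mp hb).2 y hy
  have hlower : singularProfile n y + -K ≤ μ y := by
    refine le_of_tendsto ((hlim (-K)).mono_left (nhdsWithin_le_nhds (s := Iio 1))) ?_
    filter_upwards [self_mem_nhdsWithin] with θ hθ
    exact hμ.barrier_le hn hθ hlamK (abs_le.mp hb).1 y hy
  change |μ y - singularProfile n y| ≤ K
  rw [abs_le]
  constructor <;> linarith

lemma continuousOn_mu3 (hμ : IsDiffusiveProfile n μ) : ContinuousOn (mu3 n μ) (Ioi 0) :=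
  hμ.1.continuousOn.sub <| continuousOn_const.mul <|
    continuousOn_id.rpow_const fun _ hy ↦ .inl (ne_of_gt hy)

lemma tendsto_mu3 (hμ : IsDiffusiveProfile n μ) (hn : 2 ≤ n) :
    Tendsto (mu3 n μ) atTop (𝓝 0) := by
  have hμ₀ : Tendsto μ atTop (𝓝 0) := by
    have hε : 0 < 2 * eps n := mul_pos two_pos (eps_pos hn)
    have hprod := (tendsto_rpow_neg_atTop hε).mul hμ.2.2.2.2
    rw [zero_mul] at hprod
    refine hprod.congr' ?_
    filter_upwards [eventually_gt_atTop 0] with y hy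
    rw [← mul_assoc, ← Real.rpow_add hy, neg_add_cancel, Real.rpow_zero, one_mul]
  have hδ : 0 < del n := one_pos.trans (one_lt_del hn)
  have hsub := hμ₀.sub ((tendsto_rpow_neg_atTop hδ).const_mul (lam n))
  rwa [mul_zero, sub_zero] at hsub

lemma exists_abs_mu3_le (hμ : IsDiffusiveProfile n μ) (hn : 4 ≤ n) :
    ∃ M, ∀ y ∈ Ici 0, |mu3 n μ y| ≤ M := by
  have hb : (0 : ℝ) < 1 / (n + 1) := by positivity
  obtain ⟨B, hB⟩ := exists_norm_le_on_Ici_of_tendsto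
    (hμ.continuousOn_mu3.mono (Ici_subset_Ioi.mpr hb)) (hμ.tendsto_mu3 (by omega))
  set K := max B (4 * (n + 1) * lam n + 1)
  have hBK : B ≤ K := le_max_left _ _
  have hK : 4 * (n + 1) * lam n < K := (lt_add_one _).trans_le (le_max_right _ _)
  -- `mu3` takes a junk value at `0`, where `0 ^ (-del n) = 0`.
  refine ⟨max |mu3 n μ 0| K, fun y hy ↦ ?_⟩
  rcases eq_or_lt_of_le (mem_Ici.mp hy) with rfl | hy₀
  · exact le_max_left _ _
  refine le_max_of_le_right ?_
  rcases le_total y (1 / (n + 1)) with hyb | hby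
  · exact hμ.abs_mu3_le hn hK ((hB _ self_mem_Ici).trans hBK) y ⟨hy₀, hyb⟩
  · exact (hB y hby).trans hBK

end IsDiffusiveProfile

lemma exists_abs_phi2_le {n : ℕ} (hn : 4 ≤ n) {h : ℝ → ℝ} (hh : ContinuousOn h (Ici 0))
    (hlim : Tendsto (fun z ↦ h z - lam0 n * z ^ (2 - del n)) atTop (𝓝 0)) :
    ∃ M, ∀ z ∈ Ici 0, |phi2 n h z| ≤ M := by
  have hphi2 : phi2 n h = fun z ↦ h z - lam0 n * z ^ (2 - del n) := by
    ext z
    unfold phi2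
    ring
  have hrpow : Continuous fun z : ℝ ↦ z ^ (2 - del n) :=
    Real.continuous_rpow_const (sub_nonneg.mpr (del_le_two hn))
  rw [hphi2]
  exact exists_norm_le_on_Ici_of_tendsto
    (hh.sub (continuousOn_const.mul hrpow.continuousOn)) hlim

/-! ### The profiles on the clamped inner scale -/

/-- The inner variable `|x| / t^α` clamped to `[1, t^γ]`; its upper end corresponds to
`|x| = √t`. -/
noncomputable def clampedInner (n : ℕ) (x t : ℝ) : ℝ :=
  max 1 (min (|x| / t ^ alph n) (t ^ gam n))

section ClampedInner

variable {n : ℕ} {t : ℝ}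

lemma one_le_clampedInner (n : ℕ) (x t : ℝ) : 1 ≤ clampedInner n x t := le_max_left _ _

lemma clampedInner_le_rpow (ht : 1 ≤ t) (x : ℝ) : clampedInner n x t ≤ t ^ gam n :=
  max_le (Real.one_le_rpow ht (gam_pos n).le) (min_le_right _ _)

lemma clampedInner_le_max (n : ℕ) (x t : ℝ) :
    clampedInner n x t ≤ max 1 (|x| / t ^ alph n) :=
  max_le_max_left _ (min_le_left _ _)

lemma rpow_neg_gam_mul_clampedInner_le_one (ht : 1 ≤ t) (x : ℝ) :
    t ^ (-gam n) * clampedInner n x t ≤ 1 := by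
  have ht₀ : 0 < t := one_pos.trans_le ht
  rw [Real.rpow_neg ht₀.le, inv_mul_le_one₀ (by positivity)]
  exact clampedInner_le_rpow ht x

lemma abs_div_sqrt_eq (n : ℕ) (ht : 0 < t) (x : ℝ) :
    |x| / √t = t ^ (-gam n) * (|x| / t ^ alph n) := by
  have hexp : (1 / 2 : ℝ) = gam n + alph n := by unfold alph; ring
  rw [Real.sqrt_eq_rpow, hexp, Real.rpow_add ht, Real.rpow_neg ht.le]
  field_simp

lemma ubar_nonneg (x t : ℝ) : 0 ≤ ubar x t := mu1_nonneg (by positivity)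

lemma ubar_le (n : ℕ) (ht : 0 < t) (x : ℝ) : ubar x t ≤ t ^ (-gam n) * clampedInner n x t := by
  have hy : 0 ≤ |x| / √t := by positivity
  have hle : ubar x t ≤ t ^ (-gam n) * min (|x| / t ^ alph n) (t ^ gam n) := by
    rw [mul_min_of_nonneg _ _ (by positivity), ← abs_div_sqrt_eq n ht, ← Real.rpow_add ht,
      neg_add_cancel, Real.rpow_zero]
    exact le_min ((mu1_le_kap_mul hy).trans (mul_le_of_le_one_left hy kap_le_one))
      (mu1_le_one hy)
  exact hle.trans (by gcongr; exact le_max_right _ _)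

lemma rpow_neg_eps_le (hn : 2 ≤ n) (ht : 1 ≤ t) (x : ℝ) :
    t ^ (-eps n) ≤ t ^ (-gam n) * clampedInner n x t ^ (-del n) := by
  have ht₀ : 0 < t := one_pos.trans_le ht
  have hζ : 0 < clampedInner n x t := one_pos.trans_le (one_le_clampedInner n x t)
  have hδ : -del n ≤ 0 := by linarith [one_lt_del hn]
  calc t ^ (-eps n) = t ^ (-gam n) * (t ^ gam n) ^ (-del n) := by
        rw [← gam_mul_one_add_del hn, ← Real.rpow_mul ht₀.le, ← Real.rpow_add ht₀]
        congr 1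
        ring
    _ ≤ t ^ (-gam n) * clampedInner n x t ^ (-del n) :=
        mul_le_mul_of_nonneg_left
          (Real.rpow_le_rpow_of_nonpos hζ (clampedInner_le_rpow ht x) hδ) (by positivity)

lemma exists_abs_phiFun_le (hn : 4 ≤ n) {η μ h : ℝ → ℝ} (hη : IsReactiveSubsolution n η)
    (hμ : IsDiffusiveProfile n μ) (hh : ContinuousOn h (Ici 0))
    (hlim : Tendsto (fun z ↦ h z - lam0 n * z ^ (2 - del n)) atTop (𝓝 0)) :
    ∃ C, 0 < C ∧ ∀ t ≥ 1, ∀ x,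
      |phiFun n η μ h x t| ≤ C * (t ^ (-gam n) * clampedInner n x t ^ (-del n)) := by
  have hn₂ : 2 ≤ n := by omega
  obtain ⟨M₁, hM₁, hη_le⟩ := hη.exists_abs_le hn₂
  obtain ⟨M₂, hμ_le⟩ := hμ.exists_abs_mu3_le hn
  obtain ⟨M₃, hh_le⟩ := exists_abs_phi2_le hn hh hlim
  have hM₂ : 0 ≤ M₂ := (abs_nonneg _).trans (hμ_le 0 self_mem_Ici)
  have hM₃ : 0 ≤ M₃ := (abs_nonneg _).trans (hh_le 0 self_mem_Ici)
  refine ⟨M₁ + M₂ + M₃, by positivity, fun t ht x ↦ ?_⟩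
  have ht₀ : 0 < t := one_pos.trans_le ht
  have hζ : 0 < clampedInner n x t := one_pos.trans_le (one_le_clampedInner n x t)
  have hδ : -del n ≤ 0 := by linarith [one_lt_del hn₂]
  set z := |x| / t ^ alph n
  set v := t ^ (-gam n) * clampedInner n x t ^ (-del n) with hv
  have hη_term : t ^ (-gam n) * |η z| ≤ M₁ * v := by
    calc t ^ (-gam n) * |η z| ≤ t ^ (-gam n) * (M₁ * max 1 z ^ (-del n)) := by
          gcongr
          exact hη_le z (mem_Ici.mpr (by positivity))
      _ ≤ t ^ (-gam n) * (M₁ * clampedInner n x t ^ (-del n)) := by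
          have := Real.rpow_le_rpow_of_nonpos hζ (clampedInner_le_max n x t) hδ
          gcongr ?_ * (?_ * ?_)
      _ = M₁ * v := by rw [hv]; ring
  have hε : t ^ (-eps n) ≤ v := rpow_neg_eps_le hn₂ ht x
  have hγ : t ^ (-(3 * gam n)) ≤ v :=
    (Real.rpow_le_rpow_of_exponent_le ht (neg_le_neg (eps_le_three_mul_gam hn))).trans hε
  have hμ_term : t ^ (-eps n) * |mu3 n μ (|x| / √t)| ≤ v * M₂ := by
    gcongr
    exact hμ_le _ (mem_Ici.mpr (by positivity))
  have hh_term : t ^ (-(3 * gam n)) * |phi2 n h z| ≤ v * M₃ := by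
    gcongr
    exact hh_le _ (mem_Ici.mpr (by positivity))
  calc |phiFun n η μ h x t|
      ≤ t ^ (-gam n) * |η z| + t ^ (-eps n) * |mu3 n μ (|x| / √t)|
          + t ^ (-(3 * gam n)) * |phi2 n h z| := by
        refine (abs_add_three _ _ _).trans_eq ?_
        simp only [abs_mul, abs_of_pos (Real.rpow_pos_of_pos ht₀ _), z]
    _ ≤ (M₁ + M₂ + M₃) * v := by linarith

end ClampedInner

/-! ### Coefficients of the nonlinearity -/

lemma abs_two_mul_mul_add_sq_le {u f v w C : ℝ} (hu : 0 ≤ u) (huw : u ≤ w) (hC : 0 ≤ C)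
    (hvw : v ≤ w) (hf : |f| ≤ C * v) : |2 * u * f + f ^ 2| ≤ C * (2 + C) * (v * w) := by
  have hfw : |f| ≤ C * w := hf.trans (by gcongr)
  calc |2 * u * f + f ^ 2| = |f| * |2 * u + f| := by rw [← abs_mul]; ring_nf
    _ ≤ |f| * (2 * u + |f|) := by
        gcongr
        exact (abs_add_le _ _).trans_eq (by rw [abs_of_nonneg (by positivity : 0 ≤ 2 * u)])
    _ ≤ C * v * (2 * w + C * w) := by gcongr; exact (abs_nonneg f).trans hf
    _ = C * (2 + C) * (v * w) := by ring

lemma abs_two_mul_add_two_mul_le {u f v w C : ℝ} (hu : 0 ≤ u) (huw : u ≤ w) (hC : 0 ≤ C)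
    (hvw : v ≤ w) (hf : |f| ≤ C * v) : |2 * u + 2 * f| ≤ (2 + 2 * C) * w := by
  have hfw : |f| ≤ C * w := hf.trans (by gcongr)
  obtain ⟨_, _⟩ := abs_le.mp hfw
  exact abs_le.mpr ⟨by linarith, by linarith⟩

section Decay

variable {n p : ℕ} {t ζ : ℝ}

lemma rpow_neg_two_mul_gam_mul (ht : 0 ≤ t) (k : ℕ) :
    t ^ (-(2 * gam n * k)) = ((t ^ (-gam n)) ^ 2) ^ k := by
  rw [← pow_mul, ← Real.rpow_mul_natCast ht]
  congr 1
  push_cast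
  ring

lemma rpow_one_sub_del_pow_mul_sq_le_one (hn : 4 ≤ n) (hζ : 1 ≤ ζ) :
    (ζ ^ (1 - del n)) ^ (n - 2) * ζ ^ 2 ≤ 1 := by
  have hζ₀ : 0 < ζ := one_pos.trans_le hζ
  rw [← Real.rpow_mul_natCast hζ₀.le, ← Real.rpow_natCast ζ 2, ← Real.rpow_add hζ₀]
  refine Real.rpow_le_one_of_one_le_of_nonpos hζ ?_
  push_cast [Nat.cast_sub (show 2 ≤ n by omega)]
  linarith [del_mul_sub_one (show 2 ≤ n by omega), del_le_two hn]

lemma pow_mul_pow_le_rpow_neg_epq (hn : 4 ≤ n) (hpn : p ≤ n) (q : ℕ) (ht : 0 < t) (hζ : 1 ≤ ζ)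
    (htζ : t ^ (-gam n) * ζ ≤ 1) :
    (t ^ (-gam n) * ζ ^ (-del n) * (t ^ (-gam n) * ζ)) ^ (n - p) * (t ^ (-gam n) * ζ) ^ (p - q)
      ≤ t ^ (-epq n p q) := by
  have hζ₀ : 0 < ζ := one_pos.trans_le hζ
  set τ := t ^ (-gam n)
  have : 0 < τ := Real.rpow_pos_of_pos ht _
  have hprod : τ * ζ ^ (-del n) * (τ * ζ) = τ ^ 2 * ζ ^ (1 - del n) := by
    rw [sub_eq_neg_add, Real.rpow_add_one hζ₀.ne']
    ring
  rw [hprod, epq]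
  split_ifs with hpq
  · obtain ⟨rfl, rfl⟩ := hpq
    have hepq : 2 * gam n * ((n : ℝ) - 2) + 2 * gam n = 2 * gam n * (n - 2 + 1 : ℕ) := by
      push_cast [Nat.cast_sub hpn]
      ring
    rw [hepq, rpow_neg_two_mul_gam_mul ht.le]
    calc (τ ^ 2 * ζ ^ (1 - del n)) ^ (n - 2) * (τ * ζ) ^ (2 - 0)
        = (τ ^ 2) ^ (n - 2 + 1) * ((ζ ^ (1 - del n)) ^ (n - 2) * ζ ^ 2) := by
          rw [mul_pow, mul_pow, pow_succ]
          ring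
      _ ≤ (τ ^ 2) ^ (n - 2 + 1) :=
          mul_le_of_le_one_right (by positivity) (rpow_one_sub_del_pow_mul_sq_le_one hn hζ)
  · have hζδ : ζ ^ (1 - del n) ≤ 1 := Real.rpow_le_one_of_one_le_of_nonpos hζ
      (by linarith [one_lt_del (show 2 ≤ n by omega)])
    rw [← Nat.cast_sub hpn, rpow_neg_two_mul_gam_mul ht.le]
    calc (τ ^ 2 * ζ ^ (1 - del n)) ^ (n - p) * (τ * ζ) ^ (p - q)
        ≤ (τ ^ 2 * 1) ^ (n - p) * 1 := by
          gcongr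
          exact pow_le_one₀ (by positivity) htζ
      _ = (τ ^ 2) ^ (n - p) := by rw [mul_one, mul_one]

end Decay

lemma abs_Vpq_le {n p q : ℕ} {η μ h : ℝ → ℝ} {x t v w C : ℝ} (hu : ubar x t ≤ w) (hC : 0 ≤ C)
    (hvw : v ≤ w) (hφ : |phiFun n η μ h x t| ≤ C * v) :
    |Vpq n p q η μ h x t| ≤ n.choose p * p.choose q * (C * (2 + C)) ^ (n - p)
      * (2 + 2 * C) ^ (p - q) * ((v * w) ^ (n - p) * w ^ (p - q)) := by
  have hquad := abs_two_mul_mul_add_sq_le (ubar_nonneg x t) hu hC hvw hφ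
  have hlin := abs_two_mul_add_two_mul_le (ubar_nonneg x t) hu hC hvw hφ
  calc |Vpq n p q η μ h x t|
      = n.choose p * p.choose q
          * |2 * ubar x t * phiFun n η μ h x t + phiFun n η μ h x t ^ 2| ^ (n - p)
          * |2 * ubar x t + 2 * phiFun n η μ h x t| ^ (p - q) := by
        rw [Vpq, abs_mul, abs_mul, abs_of_nonneg (by positivity), abs_pow, abs_pow]
    _ ≤ n.choose p * p.choose q * (C * (2 + C) * (v * w)) ^ (n - p)
          * ((2 + 2 * C) * w) ^ (p - q) := by
        gcongr
        exact mul_nonneg (by positivity) (pow_nonneg ((abs_nonneg _).trans hquad) _)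
    _ = n.choose p * p.choose q * (C * (2 + C)) ^ (n - p) * (2 + 2 * C) ^ (p - q)
          * ((v * w) ^ (n - p) * w ^ (p - q)) := by
        rw [mul_pow (C * _), mul_pow (2 + _)]
        ring

theorem nonlinearity_coefficients_bound_general {n : ℕ} (hn : 4 ≤ n) {η μ h : ℝ → ℝ}
    (hη : IsReactiveSubsolution n η) (hμ : IsDiffusiveProfile n μ)
    (hh : ContinuousOn h (Ici 0))
    (hlim : Tendsto (fun z ↦ h z - lam0 n * z ^ (2 - del n)) atTop (𝓝 0))
    {p q : ℕ} (hpn : p ≤ n) (hqp : q ≤ p) :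
    ∃ c : ℝ, 0 < c ∧ ∀ t ≥ (1 : ℝ), ∀ x : ℝ,
      |Vpq n p q η μ h x t| ≤ c * t ^ (-(epq n p q)) := by
  obtain ⟨C, hC, hφ⟩ := exists_abs_phiFun_le hn hη hμ hh hlim
  have hchoose : 0 < (n.choose p : ℝ) * p.choose q := by
    exact_mod_cast Nat.mul_pos (Nat.choose_pos hpn) (Nat.choose_pos hqp)
  refine ⟨n.choose p * p.choose q * (C * (2 + C)) ^ (n - p) * (2 + 2 * C) ^ (p - q),
    by positivity, fun t ht x ↦ ?_⟩
  have ht₀ : 0 < t := one_pos.trans_le ht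
  have hζ := one_le_clampedInner n x t
  have hδ : clampedInner n x t ^ (-del n) ≤ clampedInner n x t :=
    (Real.rpow_le_one_of_one_le_of_nonpos hζ
      (by linarith [one_lt_del (show 2 ≤ n by omega)])).trans hζ
  refine (abs_Vpq_le (ubar_le n ht₀ x) hC.le
    (mul_le_mul_of_nonneg_left hδ (by positivity)) (hφ t ht x)).trans ?_
  exact mul_le_mul_of_nonneg_left
    (pow_mul_pow_le_rpow_neg_epq hn hpn q ht₀ hζ (rpow_neg_gam_mul_clampedInner_le_one ht x))
    (by positivity)

/-- Bound on the coefficients V_{p,q} of the nonlinearity: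
sup_x |V_{p,q}(x,t)| ≤ c t^{−e(p,q)} for all t ≥ 1. -/
theorem nonlinearity_coefficients_bound (n : ℕ) (hn : 4 ≤ n) (η μ h : ℝ → ℝ)
    (hη : IsReactiveProfile n η) (hμ : IsDiffusiveProfile n μ) (hh : IsCorrector n η h)
    (p q : ℕ) (hp1 : 1 ≤ p) (hpn : p ≤ n) (hqp : q ≤ p) (hpq : 2 ≤ p + q) :
    ∃ c : ℝ, 0 < c ∧ ∀ t ≥ (1 : ℝ), ∀ x : ℝ,
      |Vpq n p q η μ h x t| ≤ c * t ^ (-(epq n p q)) :=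
  nonlinearity_coefficients_bound_general hn hη.isReactiveSubsolution hμ hh.1.continuousOn
    hh.2.2.2 hpn hqp
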